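/- Suppose t = 1 and U is an admissible subgroup of 𝒪_K^{*,+}. Then for every nonempty subset M of {1,…,s+1} there exists u ∈ U with ∏_{m∈M} σ_m(u) ≠ 1; that is, the character u ↦ ∏_{m∈M} σ_m(u) of U is nontrivial for every nonempty M ⊆ {1,…,s+1}. (This is the character-nontriviality lemma underlying the vanishing H^{0,q}(X(K,U), ∧^p Θ) = 0 for t = 1.) -/

import Mathlib

/-!
The image of `U` under the logarithm map spans `ℝˢ`, so no nonzero linear form vanishes on it
(`ell_sum_ne_zero`). If the character attached to `M` were trivial, taking `log ‖·‖` would give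
`∑_{m ∈ M} log ‖σ_m(u)‖ = 0` for all `u ∈ U`. Units have norm `±1`
(`sum_log_norm_embeddings_eq_zero`), and the only two nonreal embeddings are conjugate, so
`log ‖σ_{s+1}(u)‖ = -½ ∑_{i ≤ s} log σ_i(u)`. Substituting gives a linear form on `ℝˢ` which
vanishes on the image and whose `i`-th coefficient is `[i ∈ M] - ½ [s+1 ∈ M]`. If `s+1 ∈ M`, all
coefficients are `±½`; otherwise they form the indicator function of the nonempty set `M`.
In both cases the form is nonzero, a contradiction.
-/

open NumberField

noncomputable section

variable (K : Type) [Field K] [NumberField K] (U : Subgroup (𝓞 K)ˣ)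
variable (s : ℕ) (σ : Fin (s + 2) → (K →+* ℂ))

/-- The logarithm map `ℓ : U → ℝˢ`, `ℓ(u) = (log σ₁(u), …, log σ_s(u))`. -/
def ell : ↥U → (Fin s → ℝ) := fun u i =>
  Real.log ((σ (Fin.castLE (by omega) i) (algebraMap (𝓞 K) K ((u : (𝓞 K)ˣ) : 𝓞 K))).re)

variable {K U s σ}

/-- Over a full set of embeddings, the absolute values of a unit multiply to `|N(u)| = 1`;
this is the logarithmic form. -/
lemma sum_log_norm_embeddings_eq_zero (hdeg : Module.finrank ℚ K = s + 2)
    (hσinj : Function.Injective σ) (u : (𝓞 K)ˣ) :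
    ∑ i, Real.log ‖σ i (algebraMap (𝓞 K) K (u : 𝓞 K))‖ = 0 := by
  have hbij : Function.Bijective σ := by
    rw [Fintype.bijective_iff_injective_and_card]
    exact ⟨hσinj, by rw [NumberField.Embeddings.card, hdeg, Fintype.card_fin]⟩
  have hne : ∀ i, σ i (algebraMap (𝓞 K) K (u : 𝓞 K)) ≠ 0 := fun i => by
    simp
  rw [← Real.log_prod (fun i _ => norm_ne_zero_iff.mpr (hne i)), ← norm_prod]
  have h1 : ∏ i, σ i (algebraMap (𝓞 K) K (u : 𝓞 K))
      = algebraMap ℚ ℂ (Algebra.norm ℚ (algebraMap (𝓞 K) K (u : 𝓞 K))) := by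
    rw [Algebra.norm_eq_prod_embeddings, ← Equiv.prod_comp
      ((Equiv.ofBijective σ hbij).trans (RingHom.equivRatAlgHom K ℂ))]
    rfl
  have h2 : |Algebra.norm ℚ (algebraMap (𝓞 K) K (u : 𝓞 K))| = 1 := by
    simp
  rw [h1, eq_ratCast, Complex.norm_ratCast, ← Rat.cast_abs, h2]
  simp

/-- A nonzero linear form cannot vanish on the image of `ell` when that image spans. -/
lemma ell_sum_ne_zero (hspan : Submodule.span ℝ (Set.range (ell K U s σ)) = ⊤)
    (c : Fin s → ℝ) (i : Fin s) (hc : c i ≠ 0) :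
    ∃ u : U, ∑ j, c j * ell K U s σ u j ≠ 0 := by
  by_contra! h
  have hker : Submodule.span ℝ (Set.range (ell K U s σ))
      ≤ LinearMap.ker (Fintype.linearCombination ℝ c) := by
    rw [Submodule.span_le]
    rintro _ ⟨u, rfl⟩
    simpa [Fintype.linearCombination_apply, mul_comm] using h u
  rw [hspan] at hker
  have := hker (Submodule.mem_top (x := Pi.single i 1))
  simp at this
  exact hc this

/-- At a real embedding, `re` and the norm have the same logarithm, as `Real.log` is even. -/
lemma ell_eq_log_norm (hreal : ∀ i : Fin (s + 2), (i : ℕ) < s → ∀ x : K, (σ i x).im = 0)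
    (u : U) (i : Fin s) :
    ell K U s σ u i =
      Real.log ‖σ i.castSucc.castSucc (algebraMap (𝓞 K) K ((u : (𝓞 K)ˣ) : 𝓞 K))‖ := by
  rw [← Complex.abs_re_eq_norm.mpr (hreal i.castSucc.castSucc i.isLt _), Real.log_abs]
  rfl

variable (K U s σ)

/--
**Character nontriviality for `t = 1`.** If `t = 1` and `U` is admissible, then for every
nonempty subset `M ⊆ {1,…,s+1}` the character `u ↦ ∏_{m∈M} σ_m(u)` of `U` is nontrivial:
there is `u ∈ U` with `∏_{m∈M} σ_m(u) ≠ 1`. -/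
theorem OT_t_eq_one_character_nontrivial
    (hs : 0 < s)
    (hdeg : Module.finrank ℚ K = s + 2)
    (hσinj : Function.Injective σ)
    (hreal : ∀ i : Fin (s + 2), (i : ℕ) < s → ∀ x : K, (σ i x).im = 0)
    (hnonreal : ∀ i : Fin (s + 2), s ≤ (i : ℕ) → ∃ x : K, (σ i x).im ≠ 0)
    (hconj : ∀ x : K, σ ⟨s + 1, by omega⟩ x = (starRingEnd ℂ) (σ ⟨s, by omega⟩ x))
    (hUpos : ∀ u ∈ U, ∀ i : Fin (s + 2), (i : ℕ) < s →
      0 < (σ i (algebraMap (𝓞 K) K (u : (𝓞 K)ˣ))).re)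
    (hellinj : Function.Injective (ell K U s σ))
    (hdisc : DiscreteTopology (AddSubgroup.closure (Set.range (ell K U s σ))))
    (hspan : Submodule.span ℝ (Set.range (ell K U s σ)) = ⊤)
    (M : Finset (Fin (s + 1))) (hM : M.Nonempty) :
    ∃ u ∈ U, (∏ m ∈ M,
      σ (Fin.castLE (by omega) m) (algebraMap (𝓞 K) K ((u : (𝓞 K)ˣ) : 𝓞 K))) ≠ 1 := by
  by_contra! h
  -- `Fin.last s` is the index of the nonreal embedding in `{1, …, s+1}`.
  let c : Fin s → ℝ := fun i =>
    (if i.castSucc ∈ M then 1 else 0) - (if Fin.last s ∈ M then 1 / 2 else 0)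
  obtain ⟨i, hi⟩ : ∃ i, c i ≠ 0 := by
    by_cases hl : Fin.last s ∈ M
    · refine ⟨⟨0, hs⟩, ?_⟩
      simp only [c, hl, if_true]
      split_ifs <;> norm_num
    · obtain ⟨m, hm⟩ := hM
      obtain ⟨i, rfl⟩ := Fin.exists_castSucc_eq.mpr (fun e : m = Fin.last s => hl (e ▸ hm))
      exact ⟨i, by simp [c, hl, hm]⟩
  obtain ⟨u, hu⟩ := ell_sum_ne_zero hspan c i hi
  apply hu
  have hnorm := sum_log_norm_embeddings_eq_zero hdeg hσinj (u : (𝓞 K)ˣ)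
  have hlast : ‖σ (Fin.last (s + 1)) (algebraMap (𝓞 K) K ((u : (𝓞 K)ˣ) : 𝓞 K))‖
      = ‖σ (Fin.last s).castSucc (algebraMap (𝓞 K) K ((u : (𝓞 K)ˣ) : 𝓞 K))‖ :=
    (congrArg norm (hconj _)).trans (RCLike.norm_conj _)
  rw [Fin.sum_univ_castSucc, Fin.sum_univ_castSucc, hlast] at hnorm
  have hchar : ∑ m ∈ M,
      Real.log ‖σ m.castSucc (algebraMap (𝓞 K) K ((u : (𝓞 K)ˣ) : 𝓞 K))‖ = 0 := by
    rw [← Real.log_prod (fun m _ => by simp), ← norm_prod]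
    have := h u u.2
    change ∏ m ∈ M, σ m.castSucc (algebraMap (𝓞 K) K ((u : (𝓞 K)ˣ) : 𝓞 K)) = 1 at this
    rw [this]
    simp
  rw [← Finset.univ_inter M, ← Finset.sum_ite_mem, Fin.sum_univ_castSucc] at hchar
  simp only [← ell_eq_log_norm hreal] at hnorm hchar
  simp only [c, sub_mul, Finset.sum_sub_distrib, ite_mul, one_mul, zero_mul]
  by_cases hl : Fin.last s ∈ M
  · simp only [hl, if_true, ← Finset.mul_sum] at hchar ⊢
    linarith
  · simpa [hl] using hchar


end
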